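/- (Krylov–Safonov weak Harnack inequality, weak L^ε form) There exist constants ε > 0 and C > 0 depending only on n, λ, Λ such that: if a_{ij} : B₁ → ℝ are uniformly elliptic measurable coefficients and v ∈ C²(B₁) is nonnegative, satisfies Σ_{i,j} a_{ij}(x) ∂_{ij} v(x) ≤ 0 for all x ∈ B₁, and v(0) ≤ 1, then for every t > 0, |{x ∈ B_{1/2} : v(x) > t}| ≤ C t^{−ε}. -/

import Mathlib

open MeasureTheory Metric Set Filter
open scoped ENNReal NNReal Topology

noncomputable section

/-- Euclidean space `ℝⁿ`. -/
abbrev En (n : ℕ) := EuclideanSpace ℝ (Fin n)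

/-- The second partial derivative `∂_{ij} v (x)`. -/
def pd2 {n : ℕ} (v : En n → ℝ) (i j : Fin n) (x : En n) : ℝ :=
  fderiv ℝ (fun y => fderiv ℝ v y (EuclideanSpace.single i 1)) x (EuclideanSpace.single j 1)

/-- Measurable, uniformly elliptic coefficients on `Ω`:
`λ|ξ|² ≤ Σ aᵢⱼ(x) ξᵢ ξⱼ ≤ Λ|ξ|²` for every `x ∈ Ω` and all `ξ`. -/
def UnifEllipticOn {n : ℕ} (Ω : Set (En n)) (lam Lam : ℝ)
    (a : Fin n → Fin n → En n → ℝ) : Prop :=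
  (∀ i j, Measurable (a i j)) ∧
    ∀ x ∈ Ω, ∀ ξ : En n,
      lam * ∑ i, ξ i ^ 2 ≤ ∑ i, ∑ j, a i j x * ξ i * ξ j ∧
      ∑ i, ∑ j, a i j x * ξ i * ξ j ≤ Lam * ∑ i, ξ i ^ 2


section Calculus

variable {n : ℕ}

lemma pd2_eq {f : En n → ℝ} {z : En n} (hf : ContDiffAt ℝ 2 f z) (i j : Fin n) :
    pd2 f i j z = fderiv ℝ (fderiv ℝ f) z (EuclideanSpace.single j 1) (EuclideanSpace.single i 1) := by
  have h1 : DifferentiableAt ℝ (fderiv ℝ f) z :=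
    (hf.fderiv_right (m := 1) (by norm_num)).differentiableAt (by norm_num)
  unfold pd2
  rw [fderiv_clm_apply h1 (differentiableAt_const _)]
  simp

lemma pd2_symm {f : En n → ℝ} {z : En n} (hf : ContDiffAt ℝ 2 f z) (i j : Fin n) :
    pd2 f i j z = pd2 f j i z := by
  rw [pd2_eq hf, pd2_eq hf]
  exact (hf.isSymmSndFDerivAt (by simp)) _ _

lemma pd2_add {f g : En n → ℝ} {z : En n} (hf : ContDiffAt ℝ 2 f z) (hg : ContDiffAt ℝ 2 g z)
    (i j : Fin n) : pd2 (fun x => f x + g x) i j z = pd2 f i j z + pd2 g i j z := by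
  rw [pd2_eq hf, pd2_eq hg, pd2_eq (hf.add hg)]
  have h1 : DifferentiableAt ℝ (fderiv ℝ f) z :=
    (hf.fderiv_right (m := 1) (by norm_num)).differentiableAt (by norm_num)
  have h2 : DifferentiableAt ℝ (fderiv ℝ g) z :=
    (hg.fderiv_right (m := 1) (by norm_num)).differentiableAt (by norm_num)
  have h3 : fderiv ℝ (fun x => f x + g x) =ᶠ[𝓝 z] fun x => fderiv ℝ f x + fderiv ℝ g x := by
    filter_upwards [hf.eventually (by simp), hg.eventually (by simp)] with x hx hx'
    exact fderiv_fun_add (hx.differentiableAt (by norm_num)) (hx'.differentiableAt (by norm_num))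
  rw [h3.fderiv_eq, fderiv_fun_add h1 h2]
  simp

/-- quadratic form of the Hessian -/
lemma hess_quad {f : En n → ℝ} {z : En n} (hf : ContDiffAt ℝ 2 f z) (ξ : En n) :
    ∑ i, ∑ j, pd2 f i j z * ξ i * ξ j = fderiv ℝ (fderiv ℝ f) z ξ ξ := by
  have hξ : ξ = ∑ i, ξ i • EuclideanSpace.single i (1 : ℝ) := by
    ext k
    simp [Finset.sum_apply, Pi.single_apply]
  conv_rhs => rw [hξ]
  simp only [map_sum, map_smul, _root_.sum_apply, smul_eq_mul,
    _root_.smul_apply]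
  refine Finset.sum_congr rfl fun i _ => ?_
  rw [Finset.mul_sum]
  refine Finset.sum_congr rfl fun j _ => ?_
  rw [pd2_eq hf]; ring

lemma hess_nonneg {f : En n → ℝ} {z : En n} (hf : ContDiffAt ℝ 2 f z) (hm : IsLocalMin f z)
    (ξ : En n) : 0 ≤ ∑ i, ∑ j, pd2 f i j z * ξ i * ξ j := by
  rw [hess_quad hf]
  set g : ℝ → ℝ := fun t => f (z + t • ξ) with hg
  have hl : ∀ t : ℝ, HasDerivAt (fun t : ℝ => z + t • ξ) ξ t := fun t => by
    simpa using ((hasDerivAt_id t).smul_const ξ).const_add z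
  have hc : Tendsto (fun t : ℝ => z + t • ξ) (𝓝 0) (𝓝 z) := by
    have := (hl 0).continuousAt
    simpa [ContinuousAt] using this
  have hg1 : ∀ᶠ t in 𝓝 (0:ℝ), HasDerivAt g (fderiv ℝ f (z + t • ξ) ξ) t := by
    filter_upwards [hc.eventually (hf.eventually (by simp))] with t ht
    exact (ht.differentiableAt (by norm_num)).hasFDerivAt.comp_hasDerivAt t (hl t)
  have h1 : DifferentiableAt ℝ (fderiv ℝ f) z :=
    (hf.fderiv_right (m := 1) (by norm_num)).differentiableAt (by norm_num)
  have hd : deriv g =ᶠ[𝓝 0] fun t => fderiv ℝ f (z + t • ξ) ξ := by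
    filter_upwards [hg1] with t ht using ht.deriv
  have h2 : HasDerivAt (fun t : ℝ => fderiv ℝ f (z + t • ξ) ξ) (fderiv ℝ (fderiv ℝ f) z ξ ξ) 0 := by
    have h1' : HasFDerivAt (fderiv ℝ f) (fderiv ℝ (fderiv ℝ f) z) (z + (0:ℝ) • ξ) := by
      simpa using h1.hasFDerivAt
    have := h1'.comp_hasDerivAt (0:ℝ) (hl 0)
    have h3 := this.clm_apply (hasDerivAt_const (0:ℝ) ξ)
    simpa using h3
  have hdd : deriv (deriv g) 0 = fderiv ℝ (fderiv ℝ f) z ξ ξ := by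
    rw [hd.deriv_eq, h2.deriv]
  have hmin : IsLocalMin g 0 := by
    have := hc.eventually hm
    filter_upwards [this] with t ht
    simpa [hg] using ht
  by_contra hneg
  push Not at hneg
  have hmax : IsLocalMax g 0 :=
    isLocalMax_of_deriv_deriv_neg (by rw [hdd]; exact hneg) hmin.deriv_eq_zero
      hg1.self_of_nhds.continuousAt
  have hconst : g =ᶠ[𝓝 0] fun _ => g 0 := by
    filter_upwards [hmin, hmax] with t h1 h2 using le_antisymm h2 h1
  have : deriv (deriv g) 0 = 0 := by
    have h4 : deriv g =ᶠ[𝓝 0] fun _ => (0:ℝ) := by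
      have := hconst.deriv
      filter_upwards [this] with t ht
      rw [ht]; simp
    rw [h4.deriv_eq]; simp
  rw [hdd] at this
  linarith

/-- the gradient-type formula for radial functions -/
lemma pd2_radial {g g' : ℝ → ℝ} {g'' : ℝ} {c z : En n}
    (h1 : ∀ᶠ s in 𝓝 (‖z - c‖ ^ 2), HasDerivAt g (g' s) s)
    (h2 : HasDerivAt g' g'' (‖z - c‖ ^ 2)) (i j : Fin n) :
    pd2 (fun x => g (‖x - c‖ ^ 2)) i j z =
      4 * g'' * (z i - c i) * (z j - c j) + 2 * g' (‖z - c‖ ^ 2) * (if i = j then 1 else 0) := by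
  have hN : ∀ x : En n, HasFDerivAt (fun x : En n => ‖x - c‖ ^ 2) (2 • (innerSL ℝ (x - c))) x := by
    intro x
    have := ((hasFDerivAt_id x).sub_const c).norm_sq
    simpa using this
  have hcont : ContinuousAt (fun x : En n => ‖x - c‖ ^ 2) z := (hN z).continuousAt
  have he : (fun y => fderiv ℝ (fun x : En n => g (‖x - c‖ ^ 2)) y (EuclideanSpace.single i 1))
      =ᶠ[𝓝 z] fun y => g' (‖y - c‖ ^ 2) * (2 * (y i - c i)) := by
    filter_upwards [hcont.eventually h1] with y hy
    have := hy.comp_hasFDerivAt y (hN y)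
    have h3 : HasFDerivAt (fun x : En n => g (‖x - c‖ ^ 2)) _ y := this
    rw [h3.fderiv]
    simp [EuclideanSpace.inner_single_right]
  unfold pd2
  rw [he.fderiv_eq]
  have h4 : HasFDerivAt (fun y : En n => g' (‖y - c‖ ^ 2)) _ z := h2.comp_hasFDerivAt z (hN z)
  have h5 : HasFDerivAt (fun y : En n => 2 * (y i - c i))
      ((2:ℝ) • (EuclideanSpace.proj i : En n →L[ℝ] ℝ)) z := by
    have := ((EuclideanSpace.proj i : En n →L[ℝ] ℝ).hasFDerivAt (x := z)).sub_const (c i)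
    exact this.const_mul 2
  have h6 : HasFDerivAt (fun y : En n => g' (‖y - c‖ ^ 2) * (2 * (y i - c i))) _ z := h4.mul h5
  rw [h6.fderiv]
  simp [EuclideanSpace.inner_single_right]
  split_ifs <;> ring

end Calculus

section Trace

variable {n : ℕ}

lemma trace_lemma {lam : ℝ} {A : Fin n → Fin n → ℝ}
    (hA : ∀ ξ : En n, lam * ∑ i, ξ i ^ 2 ≤ ∑ i, ∑ j, A i j * ξ i * ξ j)
    {P : Fin n → Fin n → ℝ} (hs : ∀ i j, P i j = P j i)
    (hP : ∀ ξ : En n, 0 ≤ ∑ i, ∑ j, P i j * ξ i * ξ j) :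
    lam * ∑ i, P i i ≤ ∑ i, ∑ j, A i j * P i j ∧ ∀ i j, |P i j| ≤ ∑ k, P k k := by
  have hpsd : (Matrix.of P).PosSemidef := by
    refine Matrix.PosSemidef.of_dotProduct_mulVec_nonneg ?_ ?_
    · ext i j; simp [hs i j]
    · intro x
      have := hP (WithLp.toLp 2 x)
      simp only [dotProduct, Matrix.mulVec, Matrix.of_apply, Pi.star_apply, star_trivial,
        Finset.mul_sum]
      refine this.trans_eq ?_
      refine Finset.sum_congr rfl fun i _ => Finset.sum_congr rfl fun j _ => ?_
      ring
  obtain ⟨B, hB⟩ : ∃ B : Matrix (Fin n) (Fin n) ℝ, Matrix.of P = B.conjTranspose * B := by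
    open scoped MatrixOrder in
    exact CStarAlgebra.nonneg_iff_eq_star_mul_self.mp hpsd.nonneg
  have hPB : ∀ i j, P i j = ∑ k, B k i * B k j := by
    intro i j
    have := congrFun (congrFun hB i) j
    simpa [Matrix.mul_apply] using this
  have hPii : ∑ i, P i i = ∑ k, ∑ i, B k i ^ 2 := by
    rw [Finset.sum_comm]
    refine Finset.sum_congr rfl fun i _ => ?_
    rw [hPB]; exact Finset.sum_congr rfl fun k _ => by ring
  constructor
  · have e : ∑ i, ∑ j, A i j * P i j = ∑ k, ∑ i, ∑ j, A i j * B k i * B k j := by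
      simp only [hPB, Finset.mul_sum]
      symm
      rw [Finset.sum_comm]
      refine Finset.sum_congr rfl fun i _ => ?_
      rw [Finset.sum_comm]
      refine Finset.sum_congr rfl fun j _ => Finset.sum_congr rfl fun k _ => ?_
      ring
    rw [e, hPii, Finset.mul_sum]
    exact Finset.sum_le_sum fun k _ => hA (WithLp.toLp 2 (B k))
  · intro i j
    have hd : ∀ i, P i i = ∑ k, B k i ^ 2 := fun i => by
      rw [hPB]; exact Finset.sum_congr rfl fun k _ => by ring
    have hd0 : ∀ i, 0 ≤ P i i := fun i => by rw [hd]; positivity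
    have hdi : ∀ i, P i i ≤ ∑ k, P k k := fun i =>
      Finset.single_le_sum (f := fun k => P k k) (fun k _ => hd0 k) (Finset.mem_univ i)
    have h1 : |P i j| ≤ (P i i + P j j) / 2 := by
      rw [hPB i j, hd, hd, ← Finset.sum_add_distrib, Finset.sum_div]
      refine (Finset.abs_sum_le_sum_abs _ _).trans (Finset.sum_le_sum fun k _ => ?_)
      rw [abs_mul]
      nlinarith [sq_nonneg (|B k i| - |B k j|), sq_abs (B k i), sq_abs (B k j)]
    linarith [hdi i, hdi j]

end Trace

/-- Nonnegative `C²` supersolutions on the unit ball. -/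
structure Super {n : ℕ} (lam Lam : ℝ) (a : Fin n → Fin n → En n → ℝ) (v : En n → ℝ) : Prop where
  n_pos : 0 < n
  lam_pos : 0 < lam
  ell : UnifEllipticOn (ball (0 : En n) 1) lam Lam a
  smooth : ContDiffOn ℝ 2 v (ball (0 : En n) 1)
  nonneg : ∀ x ∈ ball (0 : En n) 1, 0 ≤ v x
  super : ∀ x ∈ ball (0 : En n) 1, ∑ i, ∑ j, a i j x * pd2 v i j x ≤ 0

section Barrier

variable {n : ℕ} {lam Lam : ℝ} {a : Fin n → Fin n → En n → ℝ} {v : En n → ℝ}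

lemma Super.contDiffAt (S : Super lam Lam a v) {z : En n} (hz : ‖z‖ < 1) : ContDiffAt ℝ 2 v z :=
  S.smooth.contDiffAt (isOpen_ball.mem_nhds (by simpa using hz))

lemma Super.trace_le (S : Super lam Lam a v) {z : En n} (hz : ‖z‖ < 1) :
    ∑ i, a i i z ≤ n * Lam := by
  have : ∀ i, a i i z ≤ Lam := by
    intro i
    have := (S.ell.2 z (by simpa using hz) (EuclideanSpace.single i 1)).2
    simpa [Pi.single_apply] using this
  calc ∑ i, a i i z ≤ ∑ _i : Fin n, Lam := Finset.sum_le_sum fun i _ => this i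
    _ = n * Lam := by simp

/-- At a point where the Hessian of `v + w` is nonnegative, the trace is nonnegative. -/
lemma Super.trace_w (S : Super lam Lam a v) {z : En n} (hz : ‖z‖ < 1) {w : En n → ℝ}
    (hw : ContDiffAt ℝ 2 w z) (hm : IsLocalMin (fun x => v x + w x) z) :
    lam * ∑ i, (pd2 v i i z + pd2 w i i z) ≤ ∑ i, ∑ j, a i j z * pd2 w i j z ∧
      ∀ i j, |pd2 v i j z + pd2 w i j z| ≤ ∑ i, (pd2 v i i z + pd2 w i i z) := by
  have hv := S.contDiffAt hz
  have hz' : z ∈ ball (0 : En n) 1 := by simpa using hz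
  have h := trace_lemma (fun ξ => (S.ell.2 z hz' ξ).1)
    (P := fun i j => pd2 v i j z + pd2 w i j z)
    (fun i j => by simp only [pd2_symm hv i j, pd2_symm hw i j])
    (fun ξ => by
      have := hess_nonneg (hv.add hw) hm ξ
      simpa only [pd2_add hv hw] using this)
  refine ⟨?_, h.2⟩
  have h1 := h.1
  simp only [mul_add, Finset.sum_add_distrib] at h1 ⊢
  have := S.super z hz'
  linarith

lemma Super.barrier (S : Super lam Lam a v) {q : ℕ} (hq1 : 1 ≤ q)
    (hq : n * Lam < 2 * (q + 1) * lam) {c x' : En n} {R r M : ℝ} (hR : ‖c‖ + R < 1) (hr : 0 < r)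
    (hM : ∀ x, ‖x - c‖ ≤ r → M ≤ v x) (h1 : r ≤ ‖x' - c‖) (h2 : ‖x' - c‖ ≤ R) :
    M * r ^ (2 * q) * ((‖x' - c‖ ^ (2 * q))⁻¹ - (R ^ (2 * q))⁻¹) ≤ v x' := by
  have hin : ∀ x, ‖x - c‖ ≤ R → ‖x‖ < 1 := fun x hx => by
    have := norm_add_le (x - c) c
    rw [sub_add_cancel] at this
    linarith
  have hR0 : 0 < R := by linarith
  by_contra hcon
  push Not at hcon
  have hv0 : 0 ≤ v x' := S.nonneg x' (by simpa using hin x' h2)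
  have hbr : 0 ≤ (‖x' - c‖ ^ (2 * q))⁻¹ - (R ^ (2 * q))⁻¹ := by
    have : (R ^ (2 * q))⁻¹ ≤ (‖x' - c‖ ^ (2 * q))⁻¹ := by
      apply inv_anti₀
      · have : 0 < ‖x' - c‖ := by linarith
        positivity
      · gcongr
    linarith
  have hMpos : 0 < M := by
    by_contra hM0
    push Not at hM0
    have : M * r ^ (2 * q) * ((‖x' - c‖ ^ (2 * q))⁻¹ - (R ^ (2 * q))⁻¹) ≤ 0 :=
      mul_nonpos_of_nonpos_of_nonneg
        (mul_nonpos_of_nonpos_of_nonneg hM0 (by positivity)) hbr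
    linarith
  set β := M * r ^ (2 * q) with hβ
  have hβpos : 0 < β := by positivity
  set g : ℝ → ℝ := fun s => -β * s ^ (-(q : ℤ)) with hg
  have hgpow : ∀ t : ℝ, g (t ^ 2) = -β * (t ^ (2 * q))⁻¹ := by
    intro t
    simp [hg, pow_mul]
  set f : En n → ℝ := fun x => v x + g (‖x - c‖ ^ 2) with hf
  set An : Set (En n) := closedBall c R ∩ {x | r ≤ ‖x - c‖} with hAn
  have hcomp : IsCompact An := (isCompact_closedBall c R).inter_right
    (isClosed_le continuous_const (by fun_prop))
  have hnz : ∀ x ∈ An, ‖x - c‖ ^ 2 ≠ 0 := fun x hx => by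
    have : 0 < ‖x - c‖ := lt_of_lt_of_le hr hx.2
    positivity
  have hgs : ∀ z : En n, ‖z - c‖ ^ 2 ≠ 0 → ContDiffAt ℝ 2 (fun x : En n => g (‖x - c‖ ^ 2)) z := by
    intro z hz
    have h1 : ContDiffAt ℝ 2 (fun x : En n => ‖x - c‖ ^ 2) z :=
      ((contDiff_id.sub contDiff_const).norm_sq ℝ).contDiffAt
    have h2 : ContDiffAt ℝ 2 (fun x : En n => ((‖x - c‖ ^ 2) ^ q)⁻¹) z :=
      (h1.pow q).inv (by positivity)
    have h3 := (contDiffAt_const (c := -β)).mul h2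
    simpa [hg] using h3
  have hcontf : ContinuousOn f An := by
    intro x hx
    have hx1 : ‖x‖ < 1 := hin x (by simpa [dist_eq_norm] using hx.1)
    exact ((S.contDiffAt hx1).continuousAt.add (hgs x (hnz x hx)).continuousAt).continuousWithinAt
  have hx'An : x' ∈ An := ⟨by simpa [dist_eq_norm] using h2, h1⟩
  obtain ⟨z, hzA, hzmin⟩ := hcomp.exists_isMinOn ⟨x', hx'An⟩ hcontf
  have hzR : ‖z - c‖ ≤ R := by simpa [dist_eq_norm] using hzA.1
  have hzr : r ≤ ‖z - c‖ := hzA.2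
  have hz1 : ‖z‖ < 1 := hin z hzR
  have hfz : f z < -β * (R ^ (2 * q))⁻¹ := by
    have h3 : f z ≤ f x' := hzmin hx'An
    simp only [hf, hgpow] at h3 ⊢
    nlinarith
  have hvz : 0 ≤ v z := S.nonneg z (by simpa using hz1)
  have hzR' : ‖z - c‖ < R := by
    refine lt_of_le_of_ne hzR fun h => ?_
    simp only [hf, hgpow, h] at hfz
    linarith
  have hzr' : r < ‖z - c‖ := by
    refine lt_of_le_of_ne hzr fun h => ?_
    have h3 := hM z h.symm.le
    simp only [hf, hgpow, ← h] at hfz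
    have h4 : β * (r ^ (2 * q))⁻¹ = M := by
      rw [hβ, mul_assoc, mul_inv_cancel₀ (by positivity), mul_one]
    have h5 : 0 ≤ β * (R ^ (2 * q))⁻¹ := by positivity
    linarith
  have hloc : IsLocalMin f z := by
    have hnb : An ∈ 𝓝 z := by
      have ho : IsOpen {x : En n | r < ‖x - c‖ ∧ ‖x - c‖ < R} :=
        IsOpen.and (isOpen_lt continuous_const (by fun_prop))
          (isOpen_lt (by fun_prop) continuous_const)
      filter_upwards [ho.mem_nhds ⟨hzr', hzR'⟩] with x hx
      exact ⟨by simpa [dist_eq_norm] using hx.2.le, hx.1.le⟩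
    exact hzmin.isLocalMin hnb
  have hs0 : 0 < ‖z - c‖ ^ 2 := lt_of_le_of_ne (by positivity) (hnz z hzA).symm
  set s := ‖z - c‖ ^ 2 with hs
  have hT := S.trace_w hz1 (hgs z (hnz z hzA)) hloc
  have htr0 : 0 ≤ ∑ i, (pd2 v i i z + pd2 (fun x => g (‖x - c‖ ^ 2)) i i z) :=
    (abs_nonneg _).trans (hT.2 ⟨0, S.n_pos⟩ ⟨0, S.n_pos⟩)
  have hT1 := (mul_nonneg S.lam_pos.le htr0).trans hT.1
  set g' : ℝ → ℝ := fun s => -β * (((-(q : ℤ) : ℤ) : ℝ) * s ^ (-(q : ℤ) - 1)) with hg'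
  set g'' : ℝ := -β * (((-(q : ℤ) : ℤ) : ℝ) * (((-(q : ℤ) - 1 : ℤ) : ℝ) * s ^ (-(q : ℤ) - 1 - 1)))
    with hg''
  have hp := fun i j => pd2_radial (g := g) (g' := g') (g'' := g'') (c := c) (z := z)
    (by
      filter_upwards [isOpen_ne.mem_nhds hs0.ne'] with t ht
      exact (hasDerivAt_zpow _ t (Or.inl ht)).const_mul (-β))
    (((hasDerivAt_zpow _ s (Or.inl hs0.ne')).const_mul _).const_mul (-β)) i j
  simp only [hp] at hT1
  have hsum : ∑ i, ∑ j, a i j z * (4 * g'' * (z i - c i) * (z j - c j) +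
      2 * g' s * (if i = j then 1 else 0)) =
      4 * g'' * (∑ i, ∑ j, a i j z * (z - c) i * (z - c) j) + 2 * g' s * ∑ i, a i i z := by
    simp only [mul_add, Finset.sum_add_distrib, Finset.mul_sum]
    congr 1
    · refine Finset.sum_congr rfl fun i _ => Finset.sum_congr rfl fun j _ => ?_
      simp only [PiLp.sub_apply]
      ring
    · refine Finset.sum_congr rfl fun i _ => ?_
      simp
      ring
  rw [hsum] at hT1
  have hnorm : ∑ i, (z - c) i ^ 2 = s := by
    rw [hs, EuclideanSpace.norm_sq_eq]
    simp
  have hE := (S.ell.2 z (by simpa using hz1) (z - c)).1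
  rw [hnorm] at hE
  have htr := S.trace_le hz1
  set p := s ^ (-(q : ℤ) - 1) with hpdef
  have hppos : 0 < p := zpow_pos hs0 _
  have hp2 : s ^ (-(q : ℤ) - 1 - 1) * s = p := by
    rw [hpdef, ← zpow_add_one₀ hs0.ne']; ring_nf
  set p2 := s ^ (-(q : ℤ) - 1 - 1) with hp2def
  have hp2pos : 0 < p2 := zpow_pos hs0 _
  have eg' : g' s = β * q * p := by simp only [hg']; push_cast; ring
  have eg'' : g'' = -(β * q * (q + 1) * p2) := by simp only [hg'']; push_cast; ring
  rw [eg', eg''] at hT1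
  have hqpos : (0:ℝ) < q := by exact_mod_cast hq1
  have k1 : β * q * (q + 1) * p2 * (lam * s) ≤ β * q * (q + 1) * p2 *
      (∑ i, ∑ j, a i j z * (z - c) i * (z - c) j) := by gcongr
  have k2 : β * q * p * ∑ i, a i i z ≤ β * q * p * (n * Lam) := by gcongr
  have k3 : β * q * p * (n * Lam) < β * q * p * (2 * (q + 1) * lam) := by gcongr
  have k4 : β * q * (q + 1) * p2 * (lam * s) = β * q * (q + 1) * lam * p := by
    rw [← hp2]; ring
  nlinarith

lemma Super.barrier' (S : Super lam Lam a v) {q : ℕ} (hq1 : 1 ≤ q)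
    (hq : n * Lam < 2 * (q + 1) * lam) {c x' : En n} {R r M ρ V : ℝ} (hR : ‖c‖ + R < 1)
    (hr : 0 < r) (hr1 : r ≤ 1) (hρ : 0 < ρ) (hρR : ρ < R)
    (hM : ∀ x, ‖x - c‖ ≤ r → M ≤ v x) (h2 : ‖x' - c‖ ≤ ρ) (hV : v x' ≤ V) :
    M * r ^ (2 * q) ≤ (1 + ((ρ ^ (2 * q))⁻¹ - (R ^ (2 * q))⁻¹)⁻¹) * V := by
  have hx1 : ‖x'‖ < 1 := by
    have := norm_add_le (x' - c) c
    rw [sub_add_cancel] at this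
    linarith
  have hv0 : 0 ≤ v x' := S.nonneg x' (by simpa using hx1)
  have hV0 : 0 ≤ V := hv0.trans hV
  have hκ : 0 < (ρ ^ (2 * q))⁻¹ - (R ^ (2 * q))⁻¹ := by
    rw [sub_pos]
    apply inv_strictAnti₀ (by positivity)
    exact pow_lt_pow_left₀ hρR hρ.le (by omega)
  set κ := (ρ ^ (2 * q))⁻¹ - (R ^ (2 * q))⁻¹ with hκdef
  rcases le_or_gt M 0 with hM0 | hM0
  · have : M * r ^ (2 * q) ≤ 0 := mul_nonpos_of_nonpos_of_nonneg hM0 (by positivity)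
    have : 0 ≤ (1 + κ⁻¹) * V := by positivity
    linarith
  rcases le_or_gt ‖x' - c‖ r with h | h
  · have h3 := hM x' h
    have h4 : M * r ^ (2 * q) ≤ M * 1 := by
      gcongr
      exact pow_le_one₀ hr.le hr1
    have h5 : 0 ≤ κ⁻¹ * V := by positivity
    nlinarith
  · have h3 := S.barrier hq1 hq hR hr hM h.le (h2.trans hρR.le)
    have h4 : κ ≤ (‖x' - c‖ ^ (2 * q))⁻¹ - (R ^ (2 * q))⁻¹ := by
      rw [hκdef]
      have : 0 < ‖x' - c‖ := hr.trans h
      gcongr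
    have h5 : M * r ^ (2 * q) * κ ≤ V := by
      refine le_trans ?_ (h3.trans hV)
      gcongr
    have h6 : M * r ^ (2 * q) ≤ κ⁻¹ * V := by
      rw [inv_mul_eq_div, le_div_iff₀ hκ]; exact h5
    nlinarith

end Barrier

/-- Barrier estimate, with constant depending only on the dimension and ellipticity. -/
lemma barrier_const (n q : ℕ) (lam Lam : ℝ) (hq1 : 1 ≤ q) (hq : n * Lam < 2 * (q + 1) * lam) :
    ∃ C : ℝ, 0 < C ∧ ∀ (a : Fin n → Fin n → En n → ℝ) (v : En n → ℝ), Super lam Lam a v →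
      v 0 ≤ 1 → ∀ (c : En n) (r M : ℝ), ‖c‖ ≤ 3 / 5 → 0 < r → r ≤ 1 →
        (∀ x, ‖x - c‖ ≤ r → M ≤ v x) → M * r ^ (2 * q) ≤ C := by
  set κ₁ : ℝ := (((2:ℝ)/5) ^ (2 * q))⁻¹ - (((1:ℝ)/2) ^ (2 * q))⁻¹ with hκ₁
  set κ₂ : ℝ := (((3:ℝ)/10) ^ (2 * q))⁻¹ - (((7:ℝ)/20) ^ (2 * q))⁻¹ with hκ₂
  set M₁ : ℝ := (1 + κ₁⁻¹) * 1 / (1/20) ^ (2 * q) + 1 with hM₁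
  have p1 : 0 < κ₁ := by
    rw [hκ₁, sub_pos]
    exact inv_strictAnti₀ (by positivity)
      (pow_lt_pow_left₀ (by norm_num) (by norm_num) (by omega))
  have p2 : 0 < κ₂ := by
    rw [hκ₂, sub_pos]
    exact inv_strictAnti₀ (by positivity)
      (pow_lt_pow_left₀ (by norm_num) (by norm_num) (by omega))
  have hM1pos : 0 < M₁ := by positivity
  refine ⟨(1 + κ₂⁻¹) * M₁, by positivity, ?_⟩
  intro a v S hv0 c r M hc hr hr1 hM
  have hex : ∃ x', ‖x' - (3/5 : ℝ) • c‖ ≤ 1/20 ∧ v x' < M₁ := by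
    by_contra hno
    push Not at hno
    have hn : ‖(3/5 : ℝ) • c‖ ≤ 9/25 := by
      rw [norm_smul, Real.norm_of_nonneg (by norm_num)]; linarith
    have := S.barrier' hq1 hq (c := (3/5 : ℝ) • c) (x' := 0) (R := 1/2) (r := 1/20) (M := M₁)
      (ρ := 2/5) (V := 1) (by linarith) (by norm_num) (by norm_num) (by norm_num) (by norm_num)
      hno (by rw [zero_sub, norm_neg]; linarith) hv0
    rw [← le_div_iff₀ (by positivity)] at this
    linarith
  obtain ⟨x', hx', hvx'⟩ := hex
  refine S.barrier' hq1 hq (c := c) (x' := x') (R := 7/20) (ρ := 3/10) (by linarith) hr hr1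
    (by norm_num) (by norm_num) hM ?_ hvx'.le
  have e : x' - c = (x' - (3/5 : ℝ) • c) + (-(2/5) : ℝ) • c := by
    module
  rw [e]
  refine (norm_add_le _ _).trans ?_
  rw [norm_smul, norm_neg, Real.norm_of_nonneg (by norm_num : (0:ℝ) ≤ 2/5)]
  linarith

/-- The reference compact ball. -/
def KK (n : ℕ) : Set (En n) := closedBall 0 (9 / 10)

/-- `v` is touched from below at `z`, over `KK`, by a paraboloid of opening `a` and vertex `y`. -/
def Touch {n : ℕ} (v : En n → ℝ) (a : ℝ) (z y : En n) : Prop :=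
  ∀ x ∈ KK n, v z + a / 2 * ‖z - y‖ ^ 2 ≤ v x + a / 2 * ‖x - y‖ ^ 2

/-- Contact points for paraboloids of opening `a` with vertices in `KK`. -/
def contact {n : ℕ} (v : En n → ℝ) (a : ℝ) : Set (En n) :=
  {z | z ∈ KK n ∧ ∃ y ∈ KK n, Touch v a z y}

/-- Contact point to vertex map. -/
def Psi {n : ℕ} (v : En n → ℝ) (b : ℝ) (z : En n) : En n :=
  WithLp.toLp 2 (fun i => z i + fderiv ℝ v z (EuclideanSpace.single i 1) / b)

section Contact

variable {n : ℕ} {lam Lam : ℝ} {a : Fin n → Fin n → En n → ℝ} {v : En n → ℝ}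

lemma mem_KK {x : En n} : x ∈ KK n ↔ ‖x‖ ≤ 9 / 10 := by simp [KK]

lemma isCompact_KK : IsCompact (KK n) := isCompact_closedBall _ _

lemma zero_mem_KK : (0 : En n) ∈ KK n := by rw [mem_KK]; norm_num

lemma convex_KK {x y : En n} {s t : ℝ} (hx : x ∈ KK n) (hy : y ∈ KK n) (hs : 0 ≤ s) (ht : 0 ≤ t)
    (hst : s + t = 1) : s • x + t • y ∈ KK n :=
  convex_closedBall (0 : En n) (9/10) hx hy hs ht hst

lemma Super.continuousOn (S : Super lam Lam a v) : ContinuousOn v (KK n) :=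
  S.smooth.continuousOn.mono (closedBall_subset_ball (by norm_num))

lemma isClosed_contact (hv : ContinuousOn v (KK n)) (α : ℝ) : IsClosed (contact v α) := by
  have e : contact v α = Prod.fst '' ((⋂ x ∈ KK n, {p ∈ KK n ×ˢ KK n |
      v p.1 + α / 2 * ‖p.1 - p.2‖ ^ 2 ≤ v x + α / 2 * ‖x - p.2‖ ^ 2}) : Set (En n × En n)) := by
    ext z
    simp only [contact, Touch, mem_ofPred_eq, mem_image, mem_iInter, Prod.exists, exists_and_right,
      exists_eq_right, mem_prod]
    constructor
    · rintro ⟨hz, y, hy, h⟩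
      exact ⟨y, fun x hx => ⟨⟨hz, hy⟩, h x hx⟩⟩
    · rintro ⟨y, h⟩
      have h0 := (h 0 zero_mem_KK).1
      exact ⟨h0.1, y, h0.2, fun x hx => (h x hx).2⟩
  rw [e]
  apply IsCompact.isClosed
  refine IsCompact.image ?_ continuous_fst
  have hK2 : IsCompact (KK n ×ˢ KK n) := isCompact_KK.prod isCompact_KK
  refine hK2.of_isClosed_subset ?_ ?_
  · refine isClosed_biInter fun x _ => ?_
    refine IsClosed.isClosed_le hK2.isClosed ?_ ?_
    · refine ContinuousOn.add (hv.comp continuous_fst.continuousOn fun p hp => hp.1) ?_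
      fun_prop
    · fun_prop
  · intro p hp
    simp only [mem_iInter] at hp
    exact (hp 0 zero_mem_KK).1

lemma exists_inf_conv (hv : ContinuousOn v (KK n)) (α : ℝ) :
    ∃ m : En n → ℝ, Continuous m ∧ (∀ y, ∀ x ∈ KK n, m y ≤ v x + α / 2 * ‖x - y‖ ^ 2) ∧
      ∀ y, ∃ z ∈ KK n, m y = v z + α / 2 * ‖z - y‖ ^ 2 := by
  have hco : ∀ y : En n, ContinuousOn (fun x => v x + α / 2 * ‖x - y‖ ^ 2) (KK n) := fun y =>
    hv.add (by fun_prop)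
  choose z hz hmin using fun y => isCompact_KK.exists_isMinOn ⟨0, zero_mem_KK⟩ (hco y)
  refine ⟨fun y => v (z y) + α / 2 * ‖z y - y‖ ^ 2, ?_, fun y x hx => hmin y hx,
    fun y => ⟨z y, hz y, rfl⟩⟩
  have : CompactSpace (KK n) := isCompact_iff_compactSpace.mp isCompact_KK
  let f : En n → KK n → ℝ := fun y x => v x + α / 2 * ‖(x : En n) - y‖ ^ 2
  have hf : Continuous ↿f := by
    have h1 : Continuous (fun x : KK n => v x) := hv.domRestrict
    have h2 : Continuous (fun p : En n × KK n => v p.2) := h1.comp continuous_snd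
    exact h2.add (by fun_prop)
  have := (isCompact_univ (X := KK n)).continuous_sInf hf
  refine this.congr fun y => ?_
  refine IsLeast.csInf_eq ⟨⟨⟨z y, hz y⟩, mem_univ _, rfl⟩, ?_⟩
  rintro _ ⟨x, _, rfl⟩
  exact hmin y x.2

/-- Maximal vertex selection and its monotonicity. -/
lemma exists_vertex (hv : ContinuousOn v (KK n)) {α : ℝ} (hα : 0 < α)
    (hnn : ∀ x ∈ KK n, 0 ≤ v x) :
    ∃ Y : En n → En n, (∀ x, Y x ∈ KK n) ∧
      (∀ x x', 0 ≤ inner ℝ (x - x') (Y x - Y x')) ∧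
      (∀ x ∈ KK n, ∀ w ∈ KK n, α / 2 * ‖x - Y x‖ ^ 2 ≤ v w + α / 2 * ‖w - Y x‖ ^ 2) ∧
      (∀ x z y, z ∈ KK n → y ∈ KK n → Touch v α z y → 0 ≤ inner ℝ (x - z) (Y x - y)) := by
  obtain ⟨m, hmc, hmle, hmex⟩ := exists_inf_conv hv α
  have hco : ∀ x : En n, ContinuousOn (fun y => m y - α / 2 * ‖x - y‖ ^ 2) (KK n) := fun y => by
    fun_prop
  choose Y hY hmax using fun x => isCompact_KK.exists_isMaxOn ⟨0, zero_mem_KK⟩ (hco x)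
  have key : ∀ x x' y y' : En n, m y' - α / 2 * ‖x - y'‖ ^ 2 ≤ m y - α / 2 * ‖x - y‖ ^ 2 →
      m y - α / 2 * ‖x' - y‖ ^ 2 ≤ m y' - α / 2 * ‖x' - y'‖ ^ 2 →
      0 ≤ inner ℝ (x - x') (y - y') := by
    intro x x' y y' h1 h2
    simp only [norm_sub_sq_real] at h1 h2
    simp only [inner_sub_left, inner_sub_right]
    have : 0 ≤ α * (inner ℝ x y - inner ℝ x y' - (inner ℝ x' y - inner ℝ x' y')) := by linarith
    have := nonneg_of_mul_nonneg_right this hα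
    linarith
  refine ⟨Y, hY, fun x x' => key _ _ _ _ (hmax x (hY x')) (hmax x' (hY x)), ?_, ?_⟩
  · intro x hx w hw
    have h1 : m x - α / 2 * ‖x - x‖ ^ 2 ≤ m (Y x) - α / 2 * ‖x - Y x‖ ^ 2 := hmax x hx
    have h2 := hmle (Y x) w hw
    obtain ⟨z, hz, hz'⟩ := hmex x
    have h3 := hnn z hz
    have h4 : 0 ≤ α / 2 * ‖z - x‖ ^ 2 := by positivity
    simp at h1
    linarith
  · intro x z y hz hy hT
    refine key _ _ _ _ (hmax x hy) ?_
    have h1 := hmle (Y x) z hz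
    obtain ⟨z', hz', hz''⟩ := hmex y
    have h2 := hT z' hz'
    linarith

lemma Touch.isLocalMin {b : ℝ} {z y : En n} (hT : Touch v b z y) (hz : ‖z‖ < 9 / 10) :
    IsLocalMin (fun x => v x + b / 2 * ‖x - y‖ ^ 2) z := by
  have : KK n ∈ 𝓝 z := by
    refine mem_of_superset (isOpen_ball.mem_nhds (by simpa using hz)) (ball_subset_closedBall)
  filter_upwards [this] with x hx using hT x hx

lemma contDiff_parab (b : ℝ) (y : En n) : ContDiff ℝ 2 (fun x : En n => b / 2 * ‖x - y‖ ^ 2) :=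
  contDiff_const.mul ((contDiff_id.sub contDiff_const).norm_sq ℝ)

lemma Touch.vertex_eq (S : Super lam Lam a v) {b : ℝ} (hb : 0 < b) {z y : En n}
    (hT : Touch v b z y) (hz : ‖z‖ < 9 / 10) : y = Psi v b z := by
  have h1 := (hT.isLocalMin hz).fderiv_eq_zero
  have hv : DifferentiableAt ℝ v z := (S.contDiffAt (by linarith)).differentiableAt (by norm_num)
  have hN : HasFDerivAt (fun x : En n => ‖x - y‖ ^ 2) (2 • (innerSL ℝ (z - y))) z := by
    simpa using ((hasFDerivAt_id z).sub_const y).norm_sq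
  have h2 : HasFDerivAt (fun x => v x + b / 2 * ‖x - y‖ ^ 2) _ z :=
    hv.hasFDerivAt.add (hN.const_mul (b / 2))
  rw [h2.fderiv] at h1
  ext i
  have h3 := congrArg (fun L : En n →L[ℝ] ℝ => L (EuclideanSpace.single i 1)) h1
  simp [EuclideanSpace.inner_single_right] at h3
  simp only [Psi]
  field_simp
  linarith

lemma pd2_parab (b : ℝ) (y z : En n) (i j : Fin n) :
    pd2 (fun x : En n => b / 2 * ‖x - y‖ ^ 2) i j z = if i = j then b else 0 := by
  have := pd2_radial (g := fun s => b / 2 * s) (g' := fun _ => b / 2) (g'' := 0) (c := y) (z := z)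
    (Eventually.of_forall fun s => by simpa using (hasDerivAt_id s).const_mul (b / 2))
    (hasDerivAt_const _ _) i j
  rw [this]
  split_ifs <;> ring

lemma Touch.hess_bound (S : Super lam Lam a v) {b : ℝ} (hb : 0 < b) {z y : En n}
    (hT : Touch v b z y) (hz : ‖z‖ < 9 / 10) (i j : Fin n) :
    |pd2 v i j z + (if i = j then b else 0)| ≤ b * (n * Lam / lam) := by
  have h := S.trace_w (by linarith : ‖z‖ < 1) (contDiff_parab b y).contDiffAt (hT.isLocalMin hz)
  simp only [pd2_parab] at h
  refine (h.2 i j).trans ?_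
  have h1 := h.1
  have e : ∑ i, ∑ j, a i j z * (if i = j then b else 0) = b * ∑ i, a i i z := by
    rw [Finset.mul_sum]
    refine Finset.sum_congr rfl fun i _ => ?_
    simp [mul_comm]
  rw [e] at h1
  have h2 := S.trace_le (by linarith : ‖z‖ < 1)
  have h3 : b * ∑ i, a i i z ≤ b * (n * Lam) := by gcongr
  rw [← mul_div_assoc, le_div_iff₀ S.lam_pos]
  linarith

lemma Psi_differentiableAt (S : Super lam Lam a v) (b : ℝ) {z : En n} (hz : ‖z‖ < 1) :
    DifferentiableAt ℝ (Psi v b) z := by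
  rw [differentiableAt_euclidean]
  intro i
  have hv := S.contDiffAt hz
  have h1 : DifferentiableAt ℝ (fderiv ℝ v) z :=
    (hv.fderiv_right (m := 1) (by norm_num)).differentiableAt (by norm_num)
  have h2 : DifferentiableAt ℝ (fun x => fderiv ℝ v x (EuclideanSpace.single i 1)) z :=
    h1.clm_apply (differentiableAt_const _)
  have h3 : DifferentiableAt ℝ (fun x : En n => x i) z :=
    (EuclideanSpace.proj i : En n →L[ℝ] ℝ).differentiableAt
  exact h3.add (h2.mul_const b⁻¹)

lemma Psi_det (S : Super lam Lam a v) {b : ℝ} (hb : 0 < b) {z y : En n}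
    (hT : Touch v b z y) (hz : ‖z‖ < 9 / 10) :
    |(fderiv ℝ (Psi v b) z).det| ≤ n.factorial * (n * Lam / lam) ^ n := by
  have hz1 : ‖z‖ < 1 := by linarith
  have hd := Psi_differentiableAt S b hz1
  have hv := S.contDiffAt hz1
  have h1 : DifferentiableAt ℝ (fderiv ℝ v) z :=
    (hv.fderiv_right (m := 1) (by norm_num)).differentiableAt (by norm_num)
  set B := (EuclideanSpace.basisFun (Fin n) ℝ).toBasis with hB
  have hdet : (fderiv ℝ (Psi v b) z).det =
      (LinearMap.toMatrix B B (fderiv ℝ (Psi v b) z : En n →ₗ[ℝ] En n)).det := by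
    rw [LinearMap.det_toMatrix]
  rw [hdet]
  have hent : ∀ i j, LinearMap.toMatrix B B (fderiv ℝ (Psi v b) z : En n →ₗ[ℝ] En n) i j =
      (pd2 v i j z + (if i = j then b else 0)) / b := by
    intro i j
    have h2 : DifferentiableAt ℝ (fun x => fderiv ℝ v x (EuclideanSpace.single i 1)) z :=
      h1.clm_apply (differentiableAt_const _)
    have h3 : HasFDerivAt (fun x : En n => x i) (EuclideanSpace.proj i : En n →L[ℝ] ℝ) z :=
      (EuclideanSpace.proj i : En n →L[ℝ] ℝ).hasFDerivAt
    have h4 : HasFDerivAt (fun x => Psi v b x i) _ z := h3.add (h2.hasFDerivAt.mul_const b⁻¹)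
    have h5 : HasFDerivAt (fun x => Psi v b x i)
        ((EuclideanSpace.proj i : En n →L[ℝ] ℝ) ∘L fderiv ℝ (Psi v b) z) z :=
      (EuclideanSpace.proj i : En n →L[ℝ] ℝ).hasFDerivAt.comp z hd.hasFDerivAt
    have h6 := congrArg (fun L : En n →L[ℝ] ℝ => L (EuclideanSpace.single j 1)) (h5.unique h4)
    rw [LinearMap.toMatrix_apply]
    simp [hB] at h6 ⊢
    rw [h6]
    simp only [pd2]
    split_ifs <;> field_simp <;> ring
  have := Matrix.det_le (A := LinearMap.toMatrix B B (fderiv ℝ (Psi v b) z : En n →ₗ[ℝ] En n))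
    (abv := AbsoluteValue.abs) (x := n * Lam / lam) (fun i j => by
      rw [hent]
      simp only [AbsoluteValue.abs_apply]
      rw [abs_div, abs_of_pos hb, div_le_iff₀ hb, mul_comm]
      exact hT.hess_bound S hb hz i j)
  simpa using this

lemma Psi_image (S : Super lam Lam a v) {b : ℝ} (hb : 0 < b) {E : Set (En n)}
    (hE : MeasurableSet E) (hsub : ∀ z ∈ E, ‖z‖ < 9 / 10 ∧ z ∈ contact v b) :
    volume (Psi v b '' E) ≤ ENNReal.ofReal (n.factorial * (n * Lam / lam) ^ n) * volume E := by
  have h1 := addHaar_image_le_lintegral_abs_det_fderiv (μ := volume) hE (f := Psi v b)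
    (f' := fderiv ℝ (Psi v b)) (fun x hx =>
      (Psi_differentiableAt S b (by linarith [(hsub x hx).1])).hasFDerivAt.hasFDerivWithinAt)
  refine h1.trans ?_
  refine (setLIntegral_mono' hE (g := fun _ =>
    ENNReal.ofReal (n.factorial * (n * Lam / lam) ^ n)) fun x hx => ?_).trans (by simp)
  obtain ⟨hx1, _, y, _, hT⟩ := hsub x hx
  exact ENNReal.ofReal_le_ofReal (Psi_det S hb hT hx1)

lemma antilip_volume {T : En n → En n} (hT : AntilipschitzWith 2 T) (U : Set (En n)) :
    volume U ≤ 2 ^ n * volume (T '' U) := by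
  have h : (volume : Measure (En n)) = _ := Measure.isAddLeftInvariant_eq_smul
    (volume : Measure (En n)) (Measure.hausdorffMeasure (Module.finrank ℝ (En n) : ℝ))
  rw [h]
  simp only [Measure.smul_apply]
  have := hT.le_hausdorffMeasure_image (d := (Module.finrank ℝ (En n) : ℝ)) (by positivity) U
  simp only [ENNReal.smul_def, smul_eq_mul]
  rw [← mul_assoc, mul_comm (2 ^ n : ℝ≥0∞), mul_assoc]
  gcongr
  simpa using this

end Contact

section Main

variable {n : ℕ} {lam Lam : ℝ} {a : Fin n → Fin n → En n → ℝ} {v : En n → ℝ}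

lemma parab_ball {q : ℕ} {C : ℝ}
    (hB : ∀ (c : En n) (r M : ℝ), ‖c‖ ≤ 3 / 5 → 0 < r → r ≤ 1 →
        (∀ x, ‖x - c‖ ≤ r → M ≤ v x) → M * r ^ (2 * q) ≤ C)
    {β δ d : ℝ} (hβ : 0 < β) (hδ : 0 < δ) (hδ1 : δ ≤ 3 / 10)
    (hC : C < 3 / 8 * β * δ ^ 2 * (δ / 2) ^ (2 * q)) {y c : En n} (hd : δ ≤ d)
    (hcy : ‖c - y‖ ≤ d - δ) (hc : ‖c‖ ≤ 3 / 5)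
    (h : ∀ w ∈ KK n, β / 2 * d ^ 2 ≤ v w + β / 2 * ‖w - y‖ ^ 2) : False := by
  have := hB c (δ / 2) (3 / 8 * β * δ ^ 2) hc (by positivity) (by linarith) ?_
  · linarith
  · intro w hw
    have h1 : ‖w‖ ≤ ‖w - c‖ + ‖c‖ := by simpa using norm_add_le (w - c) c
    have h2 : ‖w - y‖ ≤ ‖w - c‖ + ‖c - y‖ := norm_sub_le_norm_sub_add_norm_sub w c y
    have h3 := h w (mem_KK.mpr (by linarith))
    have h4 : ‖w - y‖ ≤ d - δ / 2 := by linarith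
    have h5 : ‖w - y‖ ^ 2 ≤ (d - δ / 2) ^ 2 := by gcongr
    have h6 : 3 / 4 * δ ^ 2 ≤ d ^ 2 - ‖w - y‖ ^ 2 := by nlinarith
    have h7 : β / 2 * (3 / 4 * δ ^ 2) ≤ β / 2 * (d ^ 2 - ‖w - y‖ ^ 2) := by gcongr
    linarith

lemma main_step (S : Super lam Lam a v) {q : ℕ} {C : ℝ}
    (hB : ∀ (c : En n) (r M : ℝ), ‖c‖ ≤ 3 / 5 → 0 < r → r ≤ 1 →
        (∀ x, ‖x - c‖ ≤ r → M ≤ v x) → M * r ^ (2 * q) ≤ C)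
    {α δ s : ℝ} (hα : 0 < α) (hδ : 0 < δ) (hs : 0 ≤ s) (hsδ : s + 2 * δ ≤ 3 / 5)
    (hC : C < 3 / 8 * α * δ ^ 2 * (δ / 2) ^ (2 * q)) :
    volume (ball (0 : En n) s \ contact v α) ≤
      2 ^ n * (ENNReal.ofReal (n.factorial * (n * Lam / lam) ^ n) *
        volume ((contact v (2 * α) \ contact v α) ∩ ball (0 : En n) (s + 2 * δ))) := by
  have hvK := S.continuousOn
  have hnn : ∀ x ∈ KK n, 0 ≤ v x := fun x hx =>
    S.nonneg x (by have := mem_KK.mp hx; simp; linarith)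
  obtain ⟨Y, hYK, hYmono, hYpar, hYT⟩ := exists_vertex hvK hα hnn
  set T : En n → En n := fun x => (1 / 2 : ℝ) • Y x + (1 / 2 : ℝ) • x with hTdef
  have hanti : AntilipschitzWith 2 T := by
    refine AntilipschitzWith.of_le_mul_dist fun x x' => ?_
    rw [dist_eq_norm, dist_eq_norm]
    have h1 := hYmono x x'
    have h2 : inner ℝ (x - x') (T x - T x') =
        1 / 2 * inner ℝ (x - x') (Y x - Y x') + 1 / 2 * ‖x - x'‖ ^ 2 := by
      have : T x - T x' = (1 / 2 : ℝ) • (Y x - Y x') + (1 / 2 : ℝ) • (x - x') := by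
        simp only [hTdef]; module
      rw [this, inner_add_right, inner_smul_right, inner_smul_right, real_inner_self_eq_norm_sq]
    have h3 := real_inner_le_norm (x - x') (T x - T x')
    rcases (norm_nonneg (x - x')).eq_or_lt with h0 | h0
    · rw [← h0]; positivity
    · have h4 : ‖x - x'‖ * (1 / 2 * ‖x - x'‖) ≤ ‖x - x'‖ * ‖T x - T x'‖ := by nlinarith
      have h5 := le_of_mul_le_mul_left h4 h0
      simp only [NNReal.coe_ofNat]
      linarith
  refine (antilip_volume hanti _).trans ?_
  gcongr
  have hmeas : MeasurableSet ((contact v (2 * α) \ contact v α) ∩ ball (0 : En n) (s + 2 * δ)) :=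
    ((isClosed_contact hvK _).measurableSet.diff (isClosed_contact hvK _).measurableSet).inter
      measurableSet_ball
  have hα2 : 0 < 2 * α := by positivity
  refine le_trans (measure_mono ?_) (Psi_image S hα2 hmeas fun z hz => ⟨?_, hz.1.1⟩)
  swap
  · have := hz.2
    simp only [mem_ball, dist_zero_right] at this
    linarith
  rintro _ ⟨x, ⟨hx, hxc⟩, rfl⟩
  have hxs : ‖x‖ < s := by simpa using hx
  have hxK : x ∈ KK n := mem_KK.mpr (by linarith)
  have hd : ‖x - Y x‖ < δ := by
    by_contra hcon
    push Not at hcon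
    set d := ‖x - Y x‖ with hddef
    have hdpos : 0 < d := by linarith
    have hyx : ‖Y x - x‖ = d := by rw [hddef, norm_sub_rev]
    refine parab_ball hB hα hδ (by linarith) hC (y := Y x) (c := x + (δ / d) • (Y x - x)) hcon
      ?_ ?_ (hYpar x hxK)
    · have e : x + (δ / d) • (Y x - x) - Y x = (1 - δ / d) • (x - Y x) := by module
      have h1 : 0 ≤ 1 - δ / d := by
        rw [sub_nonneg, div_le_one hdpos]; exact hcon
      rw [e, norm_smul, Real.norm_of_nonneg h1, ← hddef]
      apply le_of_eq
      field_simp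
    · refine (norm_add_le _ _).trans ?_
      rw [norm_smul, Real.norm_of_nonneg (by positivity), hyx, div_mul_cancel₀ _ hdpos.ne']
      linarith
  have hTx : ‖T x - x‖ ≤ δ / 2 := by
    have e : T x - x = (-(1 / 2) : ℝ) • (x - Y x) := by simp only [hTdef]; module
    rw [e, norm_smul, norm_neg, Real.norm_of_nonneg (by norm_num : (0:ℝ) ≤ 1 / 2)]
    linarith
  have hTxn : ‖T x‖ ≤ ‖T x - x‖ + ‖x‖ := by simpa using norm_add_le (T x - x) x
  have hTK : T x ∈ KK n := convex_KK (hYK x) hxK (by norm_num) (by norm_num) (by norm_num)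
  obtain ⟨z, hzK, hzmin⟩ := isCompact_KK.exists_isMinOn (f := fun w =>
    v w + (2 * α) / 2 * ‖w - T x‖ ^ 2) ⟨0, zero_mem_KK⟩ (hvK.add (by fun_prop))
  have hTouch : Touch v (2 * α) z (T x) := fun w hw => hzmin hw
  have hzd : ‖z - T x‖ < δ := by
    by_contra hcon
    push Not at hcon
    refine parab_ball hB hα2 hδ (by linarith) (hC.trans_le ?_) (y := T x) (c := T x) hcon
      (by simpa using hcon) (by linarith) (fun w hw => ?_)
    · have : 0 ≤ 3 / 8 * α * δ ^ 2 * (δ / 2) ^ (2 * q) := by positivity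
      linarith
    · have := hTouch w hw
      have := hnn z hzK
      linarith
  have hzn : ‖z‖ < s + 2 * δ := by
    have : ‖z‖ ≤ ‖z - T x‖ + ‖T x‖ := by simpa using norm_add_le (z - T x) (T x)
    linarith
  have hz9 : ‖z‖ < 9 / 10 := by linarith
  have hTP := hTouch.vertex_eq S hα2 hz9
  refine ⟨z, ⟨⟨⟨hzK, T x, hTK, hTouch⟩, ?_⟩, by simpa using hzn⟩, hTP.symm⟩
  rintro ⟨_, y', hy'K, hy'⟩
  have hy'P := hy'.vertex_eq S hα hz9
  have hmid : T x = (1 / 2 : ℝ) • y' + (1 / 2 : ℝ) • z := by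
    rw [hTP, hy'P]
    ext i
    simp [Psi]
    field_simp
    ring
  have hdiff : Y x - y' = (-1 : ℝ) • (x - z) := by
    have h1 : (2 : ℝ) • T x = (2 : ℝ) • ((1 / 2 : ℝ) • y' + (1 / 2 : ℝ) • z) := by rw [hmid]
    have h2 : Y x + x = y' + z := by
      have e1 : (2 : ℝ) • T x = Y x + x := by simp only [hTdef]; module
      have e2 : (2 : ℝ) • ((1 / 2 : ℝ) • y' + (1 / 2 : ℝ) • z) = y' + z := by module
      rw [← e1, h1, e2]
    have h3 : Y x = y' + z - x := by rw [← h2]; abel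
    rw [h3]; module
  have hmon := hYT x z y' hzK hy'K hy'
  rw [hdiff, inner_smul_right, real_inner_self_eq_norm_sq] at hmon
  have hxz : x = z := by
    have : ‖x - z‖ ^ 2 = 0 := le_antisymm (by linarith) (by positivity)
    have := pow_eq_zero_iff (two_ne_zero) |>.mp this
    exact sub_eq_zero.mp (norm_eq_zero.mp this)
  exact hxc (hxz ▸ ⟨hzK, y', hy'K, hy'⟩)

lemma contact_mono {α : ℝ} (hα : 0 < α) : contact v α ⊆ contact v (2 * α) := by
  rintro z ⟨hz, y, hy, hT⟩
  refine ⟨hz, (1 / 2 : ℝ) • y + (1 / 2 : ℝ) • z,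
    convex_KK hy hz (by norm_num) (by norm_num) (by norm_num), fun x hx => ?_⟩
  have h := hT x hx
  have e1 : ‖z - ((1 / 2 : ℝ) • y + (1 / 2 : ℝ) • z)‖ ^ 2 = 1 / 4 * ‖z - y‖ ^ 2 := by
    have : z - ((1 / 2 : ℝ) • y + (1 / 2 : ℝ) • z) = (1 / 2 : ℝ) • (z - y) := by module
    rw [this, norm_smul, mul_pow]; norm_num
  have e2 : ‖x - ((1 / 2 : ℝ) • y + (1 / 2 : ℝ) • z)‖ ^ 2 =
      1 / 2 * ‖x - y‖ ^ 2 + 1 / 2 * ‖x - z‖ ^ 2 - 1 / 4 * ‖z - y‖ ^ 2 := by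
    have t1 : x - ((1 / 2 : ℝ) • y + (1 / 2 : ℝ) • z) =
      (1 / 2 : ℝ) • (x - y) + (1 / 2 : ℝ) • (x - z) := by module
    have t2 : z - y = (x - y) - (x - z) := by abel
    rw [t1, t2, norm_add_sq_real, norm_sub_sq_real (x - y) (x - z), norm_smul, norm_smul, inner_smul_left,
      inner_smul_right]
    norm_num
    ring
  rw [e1, e2]
  have : 0 ≤ α / 2 * ‖x - z‖ ^ 2 := by positivity
  linarith

lemma contact_le (hv0 : v 0 ≤ 1) {α : ℝ} (hα : 2 ≤ α) {x : En n} (hx : x ∈ contact v α) :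
    v x ≤ α := by
  obtain ⟨_, y, hy, hT⟩ := hx
  have h := hT 0 zero_mem_KK
  have h1 := mem_KK.mp hy
  rw [zero_sub, norm_neg] at h
  have h2 : ‖y‖ ^ 2 ≤ 1 := by nlinarith [norm_nonneg y]
  have h3 : α / 2 * ‖y‖ ^ 2 ≤ α / 2 * 1 := by gcongr
  have h4 : 0 ≤ α / 2 * ‖x - y‖ ^ 2 := by positivity
  linarith

end Main

lemma pow_aux (a₀ η θ : ℝ) (q k : ℕ) :
    3 / 8 * (a₀ * 2 ^ k) * (η * θ ^ k) ^ 2 * (η * θ ^ k / 2) ^ (2 * q) =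
      a₀ * (3 / 8 * (1 / 2) ^ (2 * q) * η ^ (2 * q + 2)) * (2 * θ ^ (2 * q + 2)) ^ k := by
  have h : (2 * θ ^ (2 * q + 2)) ^ k = 2 ^ k * (θ ^ k) ^ (2 * q + 2) := by
    rw [mul_pow, ← pow_mul, ← pow_mul, mul_comm k]
  rw [h]
  generalize θ ^ k = w
  rw [div_eq_mul_one_div (η * w), mul_pow (η * w) (1 / 2 : ℝ), mul_pow η w (2 * q), pow_add, pow_add]
  ring

set_option maxHeartbeats 1000000 in
lemma level_decay (n : ℕ) (hn : 0 < n) (lam Lam : ℝ) (hlam : 0 < lam) (hLam : lam ≤ Lam) :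
    ∃ τ V a₀ : ℝ, 0 < τ ∧ τ < 1 ∧ 0 < V ∧ 0 < a₀ ∧
      ∀ (a : Fin n → Fin n → En n → ℝ) (v : En n → ℝ), Super lam Lam a v → v 0 ≤ 1 →
        (∀ t : ℝ, volume {x ∈ ball (0 : En n) (1 / 2) | t < v x} ≤ ENNReal.ofReal V) ∧
        ∀ k : ℕ, volume {x ∈ ball (0 : En n) (1 / 2) | a₀ * 2 ^ k < v x} ≤
          ENNReal.ofReal (V * τ ^ k) := by
  obtain ⟨q, hq⟩ := exists_nat_gt (n * Lam / lam)
  have hnL : 0 < n * Lam / lam := by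
    have : (0:ℝ) < n := by exact_mod_cast hn
    have : 0 < Lam := by linarith
    positivity
  have hq0 : (0:ℝ) < q := hnL.trans hq
  have hq1 : 1 ≤ q := by exact_mod_cast hq0
  have hq2 : n * Lam < 2 * (q + 1) * lam := by
    rw [div_lt_iff₀ hlam] at hq
    nlinarith
  obtain ⟨C, hCpos, hbar⟩ := barrier_const n q lam Lam hq1 hq2
  set N := 2 * q + 2 with hN
  set θ : ℝ := 1 - 1 / (2 * N) with hθ
  have hNpos : (1:ℝ) ≤ N := by exact_mod_cast (by omega : 1 ≤ N)
  have hinv : 1 / (2 * (N:ℝ)) ≤ 1 / 2 := by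
    apply one_div_le_one_div_of_le <;> linarith
  have hinv0 : 0 < 1 / (2 * (N:ℝ)) := by positivity
  have hθ0 : 0 < θ := by rw [hθ]; linarith
  have hθ1 : θ < 1 := by rw [hθ]; linarith
  have hθN : 1 ≤ 2 * θ ^ N := by
    have h := one_add_mul_le_pow (a := -(1 / (2 * (N:ℝ)))) (by linarith) N
    have e : 1 + -(1 / (2 * (N:ℝ))) = θ := by rw [hθ]; ring
    have e2 : 1 + (N:ℝ) * -(1 / (2 * (N:ℝ))) = 1 / 2 := by field_simp; norm_num
    rw [e, e2] at h
    linarith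
  set η : ℝ := (1 - θ) / 20 with hη
  have hη0 : 0 < η := by rw [hη]; linarith
  set γ : ℝ := 3 / 8 * (1 / 2) ^ (2 * q) * η ^ N with hγ
  have hγ0 : 0 < γ := by positivity
  set a₀ : ℝ := 2 + C / γ with ha₀
  have ha₀2 : 2 ≤ a₀ := by rw [ha₀]; have : 0 < C / γ := by positivity
                           linarith
  have haC : C < a₀ * γ := by
    rw [ha₀, add_mul, div_mul_cancel₀ _ hγ0.ne']; linarith
  set A : ℝ := 2 ^ n * (n.factorial * (n * Lam / lam) ^ n) with hA
  have hA0 : 0 < A := by positivity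
  set V : ℝ := (volume (ball (0 : En n) 1)).toReal with hV
  have hVtop : volume (ball (0 : En n) 1) ≠ ∞ := measure_ball_lt_top.ne
  have hV0 : 0 < V := ENNReal.toReal_pos (measure_ball_pos _ _ one_pos).ne' hVtop
  refine ⟨A / (A + 1), V, a₀, by positivity, by rw [div_lt_one (by positivity)]; linarith, hV0,
    by linarith, ?_⟩
  intro a v S hv0
  have hB := hbar a v S hv0
  have hvK := S.continuousOn
  refine ⟨fun t => ?_, ?_⟩
  · rw [hV, ENNReal.ofReal_toReal hVtop]
    exact measure_mono fun x hx => ball_subset_ball (by norm_num) hx.1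
  set s : ℕ → ℝ := fun k => 1 / 2 + 1 / 10 * θ ^ k with hs
  have hs1 : ∀ k, s k ≤ 3 / 5 := fun k => by
    have : θ ^ k ≤ 1 := pow_le_one₀ hθ0.le hθ1.le
    simp only [hs]; linarith
  have hs0 : ∀ k, 1 / 2 ≤ s k := fun k => by
    have : 0 < θ ^ k := by positivity
    simp only [hs]; linarith
  set al : ℕ → ℝ := fun k => a₀ * 2 ^ k with hal
  have hal2 : ∀ k, 2 ≤ al k := fun k => by
    have : (1:ℝ) ≤ 2 ^ k := one_le_pow₀ (by norm_num)
    simp only [hal]; nlinarith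
  have hsucc : ∀ k, al (k + 1) = 2 * al k := fun k => by simp only [hal]; ring
  set m : ℕ → ℝ := fun k => volume.real (ball (0 : En n) (s k) \ contact v (al k)) with hm
  have hfin : ∀ (r : ℝ) (E F : Set (En n)), E ⊆ ball 0 r → volume E ≠ ∞ := fun r E F h =>
    ((measure_mono h).trans_lt measure_ball_lt_top).ne
  have hrec : ∀ k, m (k + 1) ≤ A / (A + 1) * m k := by
    intro k
    set δ : ℝ := η * θ ^ k with hδ
    have hδ0 : 0 < δ := by positivity
    have hsδ : s (k + 1) + 2 * δ = s k := by
      simp only [hs, hδ, hη]; ring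
    have hkC : C < 3 / 8 * al k * δ ^ 2 * (δ / 2) ^ (2 * q) := by
      have e : 3 / 8 * al k * δ ^ 2 * (δ / 2) ^ (2 * q) = a₀ * γ * (2 * θ ^ N) ^ k := by
        exact pow_aux a₀ η θ q k
      rw [e]
      have : 1 ≤ (2 * θ ^ N) ^ k := one_le_pow₀ hθN
      have : 0 < a₀ * γ := by positivity
      nlinarith
    have hstep := main_step S hB (α := al k) (δ := δ) (s := s (k + 1)) (by linarith [hal2 k]) hδ0
      (by linarith [hs0 (k + 1)]) (by rw [hsδ]; exact hs1 k) hkC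
    rw [hsδ, ← hsucc] at hstep
    set E := (contact v (al (k + 1)) \ contact v (al k)) ∩ ball (0 : En n) (s k) with hE
    have hEm : MeasurableSet E :=
      ((isClosed_contact hvK _).measurableSet.diff (isClosed_contact hvK _).measurableSet).inter
        measurableSet_ball
    have hmono : contact v (al k) ⊆ contact v (al (k + 1)) := by
      rw [hsucc]; exact contact_mono (by linarith [hal2 k])
    have hEfin : volume E ≠ ∞ := hfin (s k) E E inter_subset_right
    have h1 : volume.real (ball (0 : En n) (s (k + 1)) \ contact v (al k)) ≤
        A * volume.real E := by
      have := ENNReal.toReal_mono (by finiteness) hstep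
      rw [ENNReal.toReal_mul, ENNReal.toReal_mul, ENNReal.toReal_ofReal (by positivity)] at this
      simp only [Measure.real]
      refine this.trans_eq ?_
      simp [hA]; ring
    have hsub : ball (0 : En n) (s (k + 1)) ⊆ ball 0 (s k) :=
      ball_subset_ball (by linarith)
    have h2 : m (k + 1) ≤ volume.real (ball (0 : En n) (s (k + 1)) \ contact v (al k)) :=
      measureReal_mono (sdiff_subset_sdiff_right hmono) (hfin (s (k+1)) _ E sdiff_subset)
    have h3 : m (k + 1) + volume.real E ≤ m k := by
      simp only [hm]
      rw [← measureReal_union _ hEm (hfin (s (k+1)) _ E sdiff_subset) hEfin]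
      · refine measureReal_mono ?_ (hfin (s k) _ E sdiff_subset)
        rintro x (⟨hx1, hx2⟩ | ⟨⟨hx1, hx2⟩, hx3⟩)
        · exact ⟨hsub hx1, fun h => hx2 (hmono h)⟩
        · exact ⟨hx3, hx2⟩
      · rw [Set.disjoint_left]
        rintro x ⟨_, hx2⟩ ⟨⟨hx3, _⟩, _⟩
        exact hx2 hx3
    rw [div_mul_eq_mul_div, le_div_iff₀ (by positivity)]
    have h4 := mul_le_mul_of_nonneg_left h3 hA0.le
    have h5 := h2.trans h1
    rw [mul_add] at h4
    rw [mul_add, mul_one, mul_comm (m (k + 1)) A]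
    linarith
  have hgeo : ∀ k, m k ≤ V * (A / (A + 1)) ^ k := by
    intro k
    induction k with
    | zero =>
      simp only [pow_zero, mul_one, hm, hV]
      exact measureReal_mono
        (sdiff_subset.trans (ball_subset_ball (by linarith [hs1 0]))) hVtop
    | succ k ih =>
      refine (hrec k).trans ?_
      rw [pow_succ]
      have : A / (A + 1) * m k ≤ A / (A + 1) * (V * (A / (A + 1)) ^ k) := by gcongr
      linarith
  intro k
  have hsub : {x ∈ ball (0 : En n) (1 / 2) | a₀ * 2 ^ k < v x} ⊆
      ball (0 : En n) (s k) \ contact v (al k) := by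
    rintro x ⟨hx1, hx2⟩
    refine ⟨ball_subset_ball (hs0 k) hx1, fun hc => ?_⟩
    have := contact_le hv0 (hal2 k) hc
    simp only [hal] at this
    linarith
  refine (measure_mono hsub).trans ?_
  rw [← ENNReal.ofReal_toReal (hfin (s k) _ ∅ sdiff_subset)]
  exact ENNReal.ofReal_le_ofReal (hgeo k)

/-- **Krylov–Safonov weak Harnack inequality (weak `L^ε` form).** There are `ε > 0` and
`C > 0` depending only on `n, λ, Λ` such that any nonnegative `C²` supersolution of
`Σ a_{ij} ∂_{ij} v ≤ 0` in `B₁` with `v(0) ≤ 1` satisfies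
`|{x ∈ B_{1/2} : v(x) > t}| ≤ C t^{−ε}` for every `t > 0`. -/
theorem krylov_safonov_weak_harnack
    (n : ℕ) (hn : 2 ≤ n) (lam Lam : ℝ) (hlam : 0 < lam) (hLam : lam ≤ Lam) :
    ∃ ε C : ℝ, 0 < ε ∧ 0 < C ∧
      ∀ (a : Fin n → Fin n → En n → ℝ) (v : En n → ℝ),
        UnifEllipticOn (ball (0 : En n) 1) lam Lam a →
        ContDiffOn ℝ 2 v (ball (0 : En n) 1) →
        (∀ x ∈ ball (0 : En n) 1, 0 ≤ v x) →
        (∀ x ∈ ball (0 : En n) 1, ∑ i, ∑ j, a i j x * pd2 v i j x ≤ 0) →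
        v 0 ≤ 1 →
        ∀ t : ℝ, 0 < t →
          volume {x ∈ ball (0 : En n) (1 / 2) | t < v x} ≤
            ENNReal.ofReal (C * t ^ (-ε)) := by

  obtain ⟨τ, V, a₀, hτ0, hτ1, hV, ha₀, H⟩ := level_decay n (by omega) lam Lam hlam hLam
  obtain ⟨ε, hε⟩ : ∃ ε : ℝ, ε = -Real.logb 2 τ := ⟨_, rfl⟩
  have hε0 : 0 < ε := by
    have := Real.logb_neg (b := 2) (by norm_num) hτ0 hτ1
    rw [hε]; linarith
  have hτ : τ = (2:ℝ) ^ (-ε) := by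
    rw [hε, neg_neg, Real.rpow_logb (by norm_num) (by norm_num) hτ0]
  refine ⟨ε, V * (2 * a₀) ^ ε, hε0, by positivity, ?_⟩
  intro a v hell hsm hnn hsup hv0 t ht
  have S : Super lam Lam a v := ⟨by omega, hlam, hell, hsm, hnn, hsup⟩
  obtain ⟨H1, H2⟩ := H a v S hv0
  have hform : V * (2 * a₀) ^ ε * t ^ (-ε) = V * (t / (2 * a₀)) ^ (-ε) := by
    have h2 : (2 * a₀) ^ (-ε) = ((2 * a₀) ^ ε)⁻¹ := Real.rpow_neg (by positivity) ε
    rw [Real.div_rpow ht.le (by positivity), h2, div_inv_eq_mul]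
    ring
  rw [hform]
  rcases lt_or_ge t a₀ with h | h
  · refine (H1 t).trans (ENNReal.ofReal_le_ofReal ?_)
    have : 1 ≤ (t / (2 * a₀)) ^ (-ε) := by
      apply Real.one_le_rpow_of_pos_of_le_one_of_nonpos (by positivity) _ (by linarith)
      rw [div_le_one (by positivity)]; linarith
    nlinarith
  · obtain ⟨k, hk1, hk2⟩ := exists_nat_pow_near (x := t / a₀) (y := (2:ℝ))
      (by rw [le_div_iff₀ ha₀]; linarith) (by norm_num)
    rw [le_div_iff₀ ha₀] at hk1
    rw [div_lt_iff₀ ha₀, pow_succ] at hk2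
    have hsub : {x ∈ ball (0 : En n) (1 / 2) | t < v x} ⊆
        {x ∈ ball (0 : En n) (1 / 2) | a₀ * 2 ^ k < v x} := fun x hx =>
      ⟨hx.1, by have := hx.2; linarith⟩
    refine (measure_mono hsub).trans ((H2 k).trans (ENNReal.ofReal_le_ofReal ?_))
    have e : τ ^ k = ((2:ℝ) ^ k) ^ (-ε) := by
      rw [hτ, ← Real.rpow_natCast, ← Real.rpow_natCast, ← Real.rpow_mul (by norm_num),
        ← Real.rpow_mul (by norm_num), mul_comm]
    rw [e]
    gcongr V * ?_
    apply Real.rpow_le_rpow_of_nonpos (by positivity) _ (by linarith)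
    rw [div_le_iff₀ (by positivity)]
    linarith
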